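/- For all s, t ≥ 1, the resilience of the t-th power of the (t(2^s−1)) × (t(2^s−1)) grid graph (with king-move adjacency) is at most 4·t²·2^s. -/

import Mathlib

open SimpleGraph

/-- One step of a disintegration: `D` consists of exactly one vertex from each
connected component of the subgraph of `G` induced on `R`. -/
def DisStep {V : Type*} (G : SimpleGraph V) (R D : Set V) : Prop :=
  ∃ hsub : D ⊆ R,
    (∀ (v w : V) (hv : v ∈ D) (hw : w ∈ D), v ≠ w →
      (G.induce R).connectedComponentMk ⟨v, hsub hv⟩ ≠
        (G.induce R).connectedComponentMk ⟨w, hsub hw⟩) ∧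
    (∀ c : (G.induce R).ConnectedComponent, ∃ (v : V) (hv : v ∈ D),
      (G.induce R).connectedComponentMk ⟨v, hsub hv⟩ = c)

/-- `(D 0, D 1, ..., D (r-1))` is a disintegration of `G`: the steps partition the
vertex set and each step removes exactly one vertex per connected component of what remains. -/
def IsDisintegration {V : Type*} (G : SimpleGraph V) (D : ℕ → Set V) (r : ℕ) : Prop :=
  (∀ i, r ≤ i → D i = ∅) ∧ (⋃ i, D i) = Set.univ ∧
    ∀ i, DisStep G (Set.univ \ ⋃ j < i, D j) (D i)

/-- The graph resilience: minimal length of a disintegration. -/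
noncomputable def resilience {V : Type*} (G : SimpleGraph V) : ℕ :=
  sInf {r | ∃ D, IsDisintegration G D r}

/-- The `t`-th power of a graph: two distinct vertices are adjacent when their
graph distance in `G` is at most `t`. -/
def powerGraph {V : Type*} (G : SimpleGraph V) (t : ℕ) : SimpleGraph V :=
  SimpleGraph.fromRel (fun a b => G.Reachable a b ∧ G.dist a b ≤ t)

/-- The `k × k` grid graph with king-move adjacency. -/
def gridGraph (k : ℕ) : SimpleGraph (Fin k × Fin k) :=
  SimpleGraph.fromRel (fun a b =>
    |(a.1.val : ℤ) - (b.1.val : ℤ)| ≤ 1 ∧ |(a.2.val : ℤ) - (b.2.val : ℤ)| ≤ 1)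

/-!
The resilience is at most the number of ranks of a *vertex ranking*, a labelling in which any walk
between two distinct vertices of equal rank meets a larger rank: removing a vertex of maximal rank
from every component lowers the maximal remaining rank.

For the `t`-th power of the grid, cut both coordinates into strips of width `t`, numbered from `1`.
A move changes a strip number by at most one, so it cannot jump over a strip. Give a vertex the
larger of the `2`-adic valuations of its two strip numbers as level. The vertices of level at most
`j` fall into square blocks of side `t * 2 ^ (j + 1)`, separated by the strips whose number is
divisible by `2 ^ (j + 1)`, and inside a block the level `j` is the cross formed by the two middle
strips, with at most `4 * t ^ 2 * 2 ^ j` vertices. Ranking by level first, and arbitrarily inside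
each cross, uses at most `∑ j < s, 4 * t ^ 2 * 2 ^ j = 4 * t ^ 2 * (2 ^ s - 1)` ranks.
-/

section VertexRanking

variable {V : Type*} {G : SimpleGraph V} {f : V → ℕ}

/-- A vertex ranking (also called an ordered colouring): every walk between distinct vertices of
equal rank passes through a vertex of larger rank. Stated contrapositively. -/
def IsVertexRanking (G : SimpleGraph V) (f : V → ℕ) : Prop :=
  ∀ ⦃u v : V⦄ (p : G.Walk u v), f u = f v → (∀ w ∈ p.support, f w ≤ f u) → u = v

/-- The vertices of `R` whose rank is maximal within their connected component of `G.induce R`: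
the step that a ranking `f` prescribes for disintegrating `G` once only `R` is left. -/
def topVertices (G : SimpleGraph V) (f : V → ℕ) (R : Set V) : Set V :=
  {v | ∃ hv : v ∈ R, ∀ w : R, (G.induce R).Reachable ⟨v, hv⟩ w → f w ≤ f v}

theorem topVertices_subset (R : Set V) : topVertices G f R ⊆ R :=
  fun _ ⟨hv, _⟩ ↦ hv

theorem mem_topVertices_of_forall_le {R : Set V} {v : V} (hv : v ∈ R) (h : ∀ w ∈ R, f w ≤ f v) :
    v ∈ topVertices G f R :=
  ⟨hv, fun w _ ↦ h w w.2⟩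

theorem exists_walk_of_reachable_induce {R : Set V} {u v : R} (h : (G.induce R).Reachable u v) :
    ∃ p : G.Walk u v, ∀ w ∈ p.support, ∃ hw : w ∈ R, (G.induce R).Reachable u ⟨w, hw⟩ := by
  classical
  obtain ⟨p⟩ := h
  let q : G.Walk u v := p.map (Embedding.induce R).toHom
  have hq : q.support = p.support.map (Embedding.induce R).toHom := Walk.support_map _ _
  refine ⟨q, fun w hw ↦ ?_⟩
  rw [hq, List.mem_map] at hw
  obtain ⟨w, hw, rfl⟩ := hw
  exact ⟨w.2, (p.takeUntil w hw).reachable⟩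

theorem IsVertexRanking.eq_of_mem_topVertices (hf : IsVertexRanking G f) {R : Set V} {u v : V}
    (hu : u ∈ topVertices G f R) (hv : v ∈ topVertices G f R)
    (huv : (G.induce R).Reachable ⟨u, topVertices_subset R hu⟩ ⟨v, topVertices_subset R hv⟩) :
    u = v := by
  obtain ⟨_, hu_max⟩ := hu
  obtain ⟨_, hv_max⟩ := hv
  obtain ⟨p, hp⟩ := exists_walk_of_reachable_induce huv
  refine hf p (le_antisymm (hv_max _ huv.symm) (hu_max _ huv)) fun w hw ↦ ?_
  obtain ⟨_, huw⟩ := hp w hw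
  exact hu_max _ huw

theorem exists_mem_topVertices (hb : BddAbove (Set.range f)) {R : Set V}
    (c : (G.induce R).ConnectedComponent) :
    ∃ (v : V) (hv : v ∈ topVertices G f R),
      (G.induce R).connectedComponentMk ⟨v, topVertices_subset R hv⟩ = c := by
  have hbdd : BddAbove ((fun v : R ↦ f v) '' c.supp) :=
    hb.mono (by rintro _ ⟨v, -, rfl⟩; exact Set.mem_range_self v.1)
  obtain ⟨v, hvc, hv⟩ := Nat.sSup_mem (c.nonempty_supp.image _) hbdd
  refine ⟨v, ⟨v.2, fun w hvw ↦ ?_⟩, hvc⟩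
  have hwc : w ∈ c.supp := (ConnectedComponent.sound hvw.symm).trans hvc
  exact (le_csSup hbdd (Set.mem_image_of_mem _ hwc)).trans hv.ge

theorem IsVertexRanking.disStep_topVertices (hf : IsVertexRanking G f)
    (hb : BddAbove (Set.range f)) (R : Set V) : DisStep G R (topVertices G f R) :=
  ⟨topVertices_subset R,
    fun _ _ hu hv huv h ↦ huv (hf.eq_of_mem_topVertices hu hv (ConnectedComponent.exact h)),
    exists_mem_topVertices hb⟩

/-- The vertices left after `n` rounds of deleting the vertices of maximal rank in their
component. -/
def remaining (G : SimpleGraph V) (f : V → ℕ) : ℕ → Set V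
  | 0 => Set.univ
  | n + 1 => remaining G f n \ topVertices G f (remaining G f n)

theorem univ_diff_iUnion_topVertices_remaining (n : ℕ) :
    Set.univ \ ⋃ j < n, topVertices G f (remaining G f j) = remaining G f n := by
  induction n with
  | zero => simp [remaining]
  | succ n ih => rw [Set.biUnion_lt_succ, ← Set.sdiff_sdiff, ih, remaining]

theorem rank_add_lt_of_mem_remaining {r : ℕ} (hr : ∀ v, f v < r) (n : ℕ) :
    ∀ v ∈ remaining G f n, f v + n < r := by
  induction n with
  | zero => exact fun v _ ↦ hr v
  | succ n ih =>
    rintro v ⟨hv, hv_top⟩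
    obtain ⟨w, hw, hvw⟩ : ∃ w ∈ remaining G f n, f v < f w := by
      by_contra! h
      exact hv_top (mem_topVertices_of_forall_le hv h)
    have := ih w hw
    omega

theorem IsVertexRanking.resilience_le (hf : IsVertexRanking G f) {r : ℕ} (hr : ∀ v, f v < r) :
    resilience G ≤ r := by
  have hb : BddAbove (Set.range f) := ⟨r, by rintro _ ⟨v, rfl⟩; exact (hr v).le⟩
  have hempty : ∀ n, r ≤ n → remaining G f n = ∅ := fun n hn ↦
    Set.eq_empty_of_forall_notMem fun v hv ↦ by
      have := rank_add_lt_of_mem_remaining hr n v hv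
      omega
  refine Nat.sInf_le ⟨fun n ↦ topVertices G f (remaining G f n), fun n hn ↦ ?_, ?_, fun n ↦ ?_⟩
  · exact Set.subset_empty_iff.1 ((topVertices_subset _).trans (hempty n hn).subset)
  · have hcover := hempty r le_rfl
    rw [← univ_diff_iUnion_topVertices_remaining, Set.sdiff_eq_empty] at hcover
    exact Set.univ_subset_iff.1
      (hcover.trans (Set.iUnion_mono fun j ↦ Set.iUnion_subset fun _ ↦ subset_rfl))
  · rw [univ_diff_iUnion_topVertices_remaining]
    exact hf.disStep_topVertices hb _

end VertexRanking

section Levels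

variable {V ι : Type*} {G : SimpleGraph V}

theorem exists_injOn_fiber_lt_of_encard_le (b : V → ι) (c : ι → ℕ)
    (hc : ∀ i, (b ⁻¹' {i}).encard ≤ c i) :
    ∃ g : V → ℕ, (∀ v, g v < c (b v)) ∧ ∀ i, (b ⁻¹' {i}).InjOn g := by
  have hfiber : ∀ i, ∃ g : V → ℕ, b ⁻¹' {i} ⊆ g ⁻¹' Set.Iio (c i) ∧ (b ⁻¹' {i}).InjOn g := by
    intro i
    refine (Set.finite_of_encard_le_coe (hc i)).exists_injOn_of_encard_le ?_
    simpa [← Finset.coe_Iio, Set.encard_coe_eq_coe_finsetCard] using hc i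
  choose g hg hinj using hfiber
  refine ⟨fun v ↦ g (b v) v, fun v ↦ hg _ rfl, ?_⟩
  rintro i u rfl v hv huv
  rw [Set.mem_preimage, Set.mem_singleton_iff] at hv
  exact hinj _ rfl hv (by simpa only [hv] using huv)

theorem eq_of_walk_of_forall_support {S : Set V} {β : V → ι}
    (hβ : ∀ ⦃v w⦄, G.Adj v w → v ∈ S → w ∈ S → β v = β w) {u v : V} (p : G.Walk u v)
    (hp : ∀ w ∈ p.support, w ∈ S) : β u = β v := by
  induction p with
  | nil => rfl
  | cons h p ih =>
    simp only [Walk.support_cons, List.forall_mem_cons] at hp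
    exact (hβ h hp.1 (hp.2 _ p.start_mem_support)).trans (ih hp.2)

theorem level_le_of_sum_add_le {level g : V → ℕ} {c : ℕ → ℕ} (hg : ∀ v, g v < c (level v)) {u v : V}
    (h : ∑ j ∈ Finset.range (level u), c j + g u ≤ ∑ j ∈ Finset.range (level v), c j + g v) :
    level u ≤ level v := by
  by_contra! hlt
  have hle : ∑ j ∈ Finset.range (level v + 1), c j ≤ ∑ j ∈ Finset.range (level u), c j :=
    Finset.sum_le_sum_of_subset (Finset.range_mono hlt)
  rw [Finset.sum_range_succ] at hle
  have := hg v
  omega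

theorem isVertexRanking_sum_add {level g : V → ℕ} {block : ℕ → V → ι} {c : ℕ → ℕ}
    (hg : ∀ v, g v < c (level v))
    (hinj : ∀ j b, {v | level v = j ∧ block j v = b}.InjOn g)
    (hblock : ∀ j, ∀ ⦃v w⦄, G.Adj v w → level v ≤ j → level w ≤ j → block j v = block j w) :
    IsVertexRanking G fun v ↦ ∑ j ∈ Finset.range (level v), c j + g v := by
  intro u v p huv hp
  have hlevel : level u = level v :=
    le_antisymm (level_le_of_sum_add_le hg huv.le) (level_le_of_sum_add_le hg huv.ge)
  have hsame : block (level u) u = block (level u) v :=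
    eq_of_walk_of_forall_support (S := {w | level w ≤ level u}) (hblock _) p
      fun w hw ↦ level_le_of_sum_add_le hg (hp w hw)
  refine hinj (level u) _ ⟨rfl, rfl⟩ ⟨hlevel.symm, hsame.symm⟩ ?_
  simpa only [hlevel, Nat.add_left_cancel_iff] using huv

theorem resilience_le_sum_of_blocks (level : V → ℕ) (block : ℕ → V → ι) (c : ℕ → ℕ) {s : ℕ}
    (hs : ∀ v, level v < s)
    (hblock : ∀ j, ∀ ⦃v w⦄, G.Adj v w → level v ≤ j → level w ≤ j → block j v = block j w)
    (hc : ∀ j b, {v | level v = j ∧ block j v = b}.encard ≤ c j) :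
    resilience G ≤ ∑ j ∈ Finset.range s, c j := by
  have hfiber (i : ℕ × ι) : (fun v ↦ (level v, block (level v) v)) ⁻¹' {i} =
      {v | level v = i.1 ∧ block i.1 v = i.2} := by
    ext v
    simp only [Set.mem_preimage, Set.mem_singleton_iff, Prod.ext_iff, Set.mem_ofPred_eq]
    exact and_congr_right fun h ↦ by rw [h]
  obtain ⟨g, hg, hinj⟩ := exists_injOn_fiber_lt_of_encard_le
    (fun v ↦ (level v, block (level v) v)) (fun i ↦ c i.1) fun i ↦ hfiber i ▸ hc i.1 i.2
  have hranking := isVertexRanking_sum_add hg (fun j b ↦ hfiber (j, b) ▸ hinj (j, b)) hblock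
  refine hranking.resilience_le fun v ↦ ?_
  calc ∑ j ∈ Finset.range (level v), c j + g v
      < ∑ j ∈ Finset.range (level v + 1), c j := by
        rw [Finset.sum_range_succ]
        exact Nat.add_lt_add_left (hg v) _
    _ ≤ ∑ j ∈ Finset.range s, c j := Finset.sum_le_sum_of_subset (Finset.range_mono (hs v))

end Levels

section PowerGraph

variable {V : Type*} {G : SimpleGraph V} {φ : V → ℤ}

theorem abs_sub_le_length_of_forall_adj (hφ : ∀ ⦃v w⦄, G.Adj v w → |φ v - φ w| ≤ 1) {v w : V}
    (p : G.Walk v w) : |φ v - φ w| ≤ p.length := by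
  induction p with
  | nil => simp
  | @cons u v w h p ih =>
    calc |φ u - φ w| ≤ |φ u - φ v| + |φ v - φ w| := abs_sub_le _ _ _
      _ ≤ 1 + p.length := add_le_add (hφ h) ih
      _ = (Walk.cons h p).length := by rw [Walk.length_cons, Nat.cast_succ, add_comm]

theorem abs_sub_le_of_powerGraph_adj (hφ : ∀ ⦃v w⦄, G.Adj v w → |φ v - φ w| ≤ 1) {t : ℕ} {v w : V}
    (h : (powerGraph G t).Adj v w) : |φ v - φ w| ≤ t := by
  have hdist : ∀ {v w : V}, G.Reachable v w ∧ G.dist v w ≤ t → |φ v - φ w| ≤ t := by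
    rintro v w ⟨hreach, hle⟩
    obtain ⟨p, hp⟩ := hreach.exists_walk_length_eq_dist
    exact (abs_sub_le_length_of_forall_adj hφ p).trans (by exact_mod_cast hp.trans_le hle)
  obtain ⟨-, h | h⟩ := h
  · exact hdist h
  · rw [abs_sub_comm]
    exact hdist h

theorem abs_sub_fst_le_of_gridGraph_adj {k : ℕ} ⦃v w : Fin k × Fin k⦄ (h : (gridGraph k).Adj v w) :
    |(v.1 : ℤ) - w.1| ≤ 1 := by
  obtain ⟨-, h | h⟩ := h
  · exact h.1
  · exact abs_sub_comm (v.1 : ℤ) w.1 ▸ h.1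

theorem abs_sub_snd_le_of_gridGraph_adj {k : ℕ} ⦃v w : Fin k × Fin k⦄ (h : (gridGraph k).Adj v w) :
    |(v.2 : ℤ) - w.2| ≤ 1 := by
  obtain ⟨-, h | h⟩ := h
  · exact h.2
  · exact abs_sub_comm (v.2 : ℤ) w.2 ▸ h.2

end PowerGraph

section DyadicBlocks

theorem padicValNat_two_lt_of_lt_two_pow {q s : ℕ} (hq : q ≠ 0) (h : q < 2 ^ s) :
    padicValNat 2 q < s :=
  (padicValNat_le_nat_log q).trans_lt (Nat.log_lt_of_lt_pow hq h)

theorem not_two_pow_dvd_of_padicValNat_le {q j : ℕ} (hq : q ≠ 0) (h : padicValNat 2 q ≤ j) :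
    ¬ 2 ^ (j + 1) ∣ q := by
  rwa [padicValNat_dvd_iff_le hq, not_le, Nat.lt_succ_iff]

theorem eq_two_pow_padicValNat_mul {q : ℕ} (hq : q ≠ 0) :
    q = 2 ^ padicValNat 2 q * (2 * (q / 2 ^ (padicValNat 2 q + 1)) + 1) := by
  have hndvd := not_two_pow_dvd_of_padicValNat_le hq le_rfl
  obtain ⟨o, ho⟩ : 2 ^ padicValNat 2 q ∣ q := pow_padicValNat_dvd
  generalize padicValNat 2 q = j at ho hndvd ⊢
  subst ho
  rw [pow_succ, Nat.mul_dvd_mul_iff_left (by positivity)] at hndvd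
  rw [pow_succ, Nat.mul_div_mul_left _ _ (by positivity)]
  congr 1
  omega

theorem div_eq_div_of_not_dvd {n a b : ℕ} (ha : ¬ n ∣ a) (hb : ¬ n ∣ b) (hab : a ≤ b + 1)
    (hba : b ≤ a + 1) : a / n = b / n := by
  obtain rfl | rfl | rfl : a = b ∨ a = b + 1 ∨ b = a + 1 := by omega
  · rfl
  · exact Nat.succ_div_of_not_dvd ha
  · exact (Nat.succ_div_of_not_dvd hb).symm

theorem encard_setOf_add_div_eq_le (a b : ℕ) {n : ℕ} (hn : 0 < n) :
    {x : ℕ | (x + a) / n = b}.encard ≤ n := by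
  have hmaps : Set.MapsTo (· + a) {x : ℕ | (x + a) / n = b} (Finset.Ico (b * n) (b * n + n)) := by
    rintro x rfl
    simpa [Nat.add_one_mul] using
      And.intro (Nat.div_mul_le_self (x + a) n) (Nat.lt_div_mul_add hn)
  refine (Set.encard_le_encard_of_injOn hmaps (add_left_injective a).injOn).trans ?_
  rw [Set.encard_coe_eq_coe_finsetCard, Nat.card_Ico, Nat.add_sub_cancel_left]

end DyadicBlocks

section Cross

variable {t : ℕ}

/-- The number of the width-`t` strip containing `x`. Counting from `1` makes every strip number
nonzero, so that its `2`-adic valuation is meaningful. -/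
def strip (t x : ℕ) : ℕ := x / t + 1

/-- The level of a vertex: the larger of the `2`-adic valuations of its two strip numbers. -/
def crossLevel (t : ℕ) (v : ℕ × ℕ) : ℕ :=
  max (padicValNat 2 (strip t v.1)) (padicValNat 2 (strip t v.2))

/-- The position of the dyadic square block, of side `t * 2 ^ (j + 1)`, containing a vertex. -/
def dyadicBlock (t j : ℕ) (v : ℕ × ℕ) : ℕ × ℕ :=
  (strip t v.1 / 2 ^ (j + 1), strip t v.2 / 2 ^ (j + 1))

theorem strip_ne_zero (t x : ℕ) : strip t x ≠ 0 :=
  Nat.succ_ne_zero _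

theorem strip_eq_add_div (ht : 0 < t) (x : ℕ) : strip t x = (x + t) / t :=
  (Nat.add_div_right x ht).symm

theorem strip_lt_of_lt_mul {x n : ℕ} (hx : x < t * (n - 1)) : strip t x < n :=
  Nat.add_lt_of_lt_sub (Nat.div_lt_of_lt_mul hx)

theorem strip_le_strip_add_one (ht : 0 < t) {x y : ℕ} (h : x ≤ y + t) :
    strip t x ≤ strip t y + 1 := by
  rw [strip_eq_add_div ht y]
  exact Nat.succ_le_succ (Nat.div_le_div_right h)

theorem strip_div_eq_of_abs_sub_le (ht : 0 < t) {j x y : ℕ} (hx : padicValNat 2 (strip t x) ≤ j)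
    (hy : padicValNat 2 (strip t y) ≤ j) (hxy : |(x : ℤ) - y| ≤ t) :
    strip t x / 2 ^ (j + 1) = strip t y / 2 ^ (j + 1) := by
  rw [abs_le] at hxy
  exact div_eq_div_of_not_dvd (not_two_pow_dvd_of_padicValNat_le (strip_ne_zero t x) hx)
    (not_two_pow_dvd_of_padicValNat_le (strip_ne_zero t y) hy)
    (strip_le_strip_add_one ht (by omega)) (strip_le_strip_add_one ht (by omega))

theorem encard_setOf_strip_eq_le (ht : 0 < t) (q : ℕ) : {x | strip t x = q}.encard ≤ t := by
  simpa only [strip_eq_add_div ht] using encard_setOf_add_div_eq_le t q ht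

theorem encard_setOf_strip_div_eq_le (ht : 0 < t) (b : ℕ) {n : ℕ} (hn : 0 < n) :
    {x | strip t x / n = b}.encard ≤ t * n := by
  simpa only [strip_eq_add_div ht, Nat.div_div_eq_div_mul, Nat.cast_mul] using
    encard_setOf_add_div_eq_le t b (Nat.mul_pos ht hn)

theorem encard_cross_le (ht : 0 < t) (j : ℕ) (b : ℕ × ℕ) :
    {v | crossLevel t v = j ∧ dyadicBlock t j v = b}.encard ≤ (4 * t ^ 2 * 2 ^ j : ℕ) := by
  let middle (i : ℕ) : Set ℕ := {x | strip t x = 2 ^ j * (2 * i + 1)}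
  let side (i : ℕ) : Set ℕ := {x | strip t x / 2 ^ (j + 1) = i}
  have hsub : {v | crossLevel t v = j ∧ dyadicBlock t j v = b} ⊆
      middle b.1 ×ˢ side b.2 ∪ side b.1 ×ˢ middle b.2 := by
    rintro ⟨x, y⟩ ⟨rfl, rfl⟩
    rcases max_choice (padicValNat 2 (strip t x)) (padicValNat 2 (strip t y)) with h | h
    · left
      refine ⟨?_, rfl⟩
      simpa only [middle, dyadicBlock, crossLevel, h, Set.mem_ofPred_eq] using
        eq_two_pow_padicValNat_mul (strip_ne_zero t x)
    · right
      refine ⟨rfl, ?_⟩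
      simpa only [middle, dyadicBlock, crossLevel, h, Set.mem_ofPred_eq] using
        eq_two_pow_padicValNat_mul (strip_ne_zero t y)
  have hmiddle (i : ℕ) : (middle i).encard ≤ t := encard_setOf_strip_eq_le ht _
  have hside (i : ℕ) : (side i).encard ≤ t * 2 ^ (j + 1) := by
    exact_mod_cast encard_setOf_strip_div_eq_le ht i (n := 2 ^ (j + 1)) (by positivity)
  calc {v | crossLevel t v = j ∧ dyadicBlock t j v = b}.encard
      ≤ (middle b.1 ×ˢ side b.2).encard + (side b.1 ×ˢ middle b.2).encard :=
        (Set.encard_le_encard hsub).trans (Set.encard_union_le _ _)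
    _ ≤ t * (t * 2 ^ (j + 1)) + t * 2 ^ (j + 1) * t := by
        rw [Set.encard_prod, Set.encard_prod]
        gcongr <;> simp only [hmiddle, hside]
    _ = (4 * t ^ 2 * 2 ^ j : ℕ) := by
        push_cast
        ring

end Cross

theorem resilience_powerGraph_gridGraph_le {s t k : ℕ} (ht : 0 < t) (hk : k ≤ t * (2 ^ s - 1)) :
    resilience (powerGraph (gridGraph k) t) ≤ 4 * t ^ 2 * (2 ^ s - 1) := by
  let toNat : Fin k × Fin k → ℕ × ℕ := Prod.map Fin.val Fin.val
  have hinj : toNat.Injective := Fin.val_injective.prodMap Fin.val_injective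
  have hlevel (x : Fin k) : padicValNat 2 (strip t x) < s :=
    padicValNat_two_lt_of_lt_two_pow (strip_ne_zero t x)
      (strip_lt_of_lt_mul (x.isLt.trans_le hk))
  calc resilience (powerGraph (gridGraph k) t)
      ≤ ∑ j ∈ Finset.range s, 4 * t ^ 2 * 2 ^ j := by
        refine resilience_le_sum_of_blocks (crossLevel t ∘ toNat) (fun j ↦ dyadicBlock t j ∘ toNat)
          _ (fun v ↦ max_lt (hlevel v.1) (hlevel v.2)) (fun j v w h hv hw ↦ ?_) fun j b ↦ ?_
        · obtain ⟨hv₁, hv₂⟩ := max_le_iff.1 hv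
          obtain ⟨hw₁, hw₂⟩ := max_le_iff.1 hw
          exact Prod.ext
            (strip_div_eq_of_abs_sub_le ht hv₁ hw₁
              (abs_sub_le_of_powerGraph_adj abs_sub_fst_le_of_gridGraph_adj h))
            (strip_div_eq_of_abs_sub_le ht hv₂ hw₂
              (abs_sub_le_of_powerGraph_adj abs_sub_snd_le_of_gridGraph_adj h))
        · exact (Set.encard_le_encard_of_injOn (f := toNat) (fun _ hv ↦ hv) hinj.injOn).trans
            (encard_cross_le ht j b)
    _ = 4 * t ^ 2 * (2 ^ s - 1) := by
        rw [← Finset.mul_sum, Nat.geomSum_eq le_rfl, Nat.div_one]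

theorem stmt12 (s t : ℕ) (hs : 1 ≤ s) (ht : 1 ≤ t) :
    resilience (powerGraph (gridGraph (t * (2 ^ s - 1))) t) ≤ 4 * t ^ 2 * 2 ^ s := by
  exact (resilience_powerGraph_gridGraph_le ht le_rfl).trans
    (Nat.mul_le_mul_left _ (Nat.sub_le _ _))
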